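/- The greedy-heuristic algorithm is not truthful. Concretely, let T = {t_1,…,t_5} with appraisements a_1 = 2, a_2 = 3, a_3 = 4, a_4 = 2, a_5 = 5, budget B = 5, and vehicles V = {v_1, v_2, v_3} with T_1 = {t_1,t_3,t_5}, T_2 = {t_1,t_2,t_5}, T_3 = {t_3,t_4,t_5} and true costs c_1 = c_2 = c_3 = 2. If every vehicle bids its true cost, then v_2 is selected as a winner with payment 2 and obtains utility 0; but for any λ ∈ (0,1), if v_2 bids 2 + λ while v_1 and v_3 bid truthfully, then v_2 is still selected as a winner with payment 2 + λ and obtains utility λ > 0. Hence v_2 strictly increases its utility by offering an untruthful bid. -/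

import Mathlib

/-- Total appraisement of the tasks covered by the vehicle set `W`:
`A(W) = Σ_{t ∈ ⋃_{i∈W} T_i} a_t`. -/
noncomputable def Aval {V T : Type} [DecidableEq T]
    (a : T → ℝ) (Ts : V → Finset T) (W : Finset V) : ℝ :=
  ∑ t ∈ W.biUnion Ts, a t

/-- Profit-at-bids: `P̄(W) = A(W) − Σ_{i∈W} b_i`. -/
noncomputable def Pbar {V T : Type} [DecidableEq T]
    (a : T → ℝ) (Ts : V → Finset T) (b : V → ℝ) (W : Finset V) : ℝ :=
  Aval a Ts W - ∑ i ∈ W, b i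

/-- Marginal coverage value `A(v|W) = A(W ∪ {v}) − A(W)`. -/
noncomputable def margA {V T : Type} [DecidableEq V] [DecidableEq T]
    (a : T → ℝ) (Ts : V → Finset T) (v : V) (W : Finset V) : ℝ :=
  Aval a Ts (insert v W) - Aval a Ts W

/-- Marginal profit-at-bids `P̄(v|W) = P̄(W ∪ {v}) − P̄(W)`. -/
noncomputable def margP {V T : Type} [DecidableEq V] [DecidableEq T]
    (a : T → ℝ) (Ts : V → Finset T) (b : V → ℝ) (v : V) (W : Finset V) : ℝ :=
  Pbar a Ts b (insert v W) - Pbar a Ts b W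

/-- Pick an element of `F` maximizing `f` (with a fixed tie-breaking rule). -/
noncomputable def pickMax {V : Type} (f : V → ℝ) (F : Finset V) : Option V :=
  if h : F.Nonempty then some (F.exists_max_image f h).choose else none

/-- Fuel-based implementation of the greedy-heuristic algorithm: starting from
`W = ∅`, `s = 0`, let `F = {v ∈ V ∖ W : b_v ≤ B − s}`; while `F ≠ ∅`, select
`v* ∈ F` maximizing `P̄(v|W)/b_v`; if `P̄(v*|W) < 0` stop, otherwise add `v*` to
`W` and `b_{v*}` to `s`. -/
noncomputable def greedyAux {V T : Type} [Fintype V] [DecidableEq V] [DecidableEq T]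
    (a : T → ℝ) (Ts : V → Finset T) (b : V → ℝ) (B : ℝ) :
    ℕ → Finset V → ℝ → Finset V
  | 0, W, _ => W
  | n+1, W, s =>
    match pickMax (fun v => margP a Ts b v W / b v)
        (Finset.univ.filter (fun v => v ∉ W ∧ b v ≤ B - s)) with
    | none => W
    | some v =>
      if margP a Ts b v W < 0 then W
      else greedyAux a Ts b B n (insert v W) (s + b v)

/-- The winner set returned by the greedy-heuristic algorithm
(each winner is paid its bid). -/
noncomputable def greedyHeuristic {V T : Type} [Fintype V] [DecidableEq V] [DecidableEq T]
    (a : T → ℝ) (Ts : V → Finset T) (b : V → ℝ) (B : ℝ) : Finset V :=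
  greedyAux a Ts b B (Fintype.card V) ∅ 0

/-!
Only `v₂` offers the task `t₂`, worth `3`, so at a bid `x < 3` it remains profitable until it is
chosen. If `v₁` or `v₃` is chosen in the first round, the other of these two is left with marginal
profit `0`, because they share the tasks `t₃` and `t₅`; so `v₂` is chosen in the second round at the
latest. Being paid its bid, it gains by raising it from `2` to `2 + λ`.
-/

section Marginal

variable {V T : Type} [DecidableEq V] [DecidableEq T]
  (a : T → ℝ) (Ts : V → Finset T) (b : V → ℝ)

theorem margA_eq_sum_sdiff (v : V) (W : Finset V) :
    margA a Ts v W = ∑ t ∈ Ts v \ W.biUnion Ts, a t := by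
  rw [margA, Aval, Aval, Finset.biUnion_insert, sub_eq_iff_eq_add,
    ← Finset.sdiff_union_self_eq_union, Finset.sum_union Finset.sdiff_disjoint]

theorem margP_eq_margA_sub {v : V} {W : Finset V} (hv : v ∉ W) :
    margP a Ts b v W = margA a Ts v W - b v := by
  rw [margP, margA, Pbar, Pbar, Finset.sum_insert hv]
  ring

end Marginal

section Greedy

theorem exists_pickMax_eq_some {V : Type} (f : V → ℝ) {F : Finset V} (hF : F.Nonempty) :
    ∃ v ∈ F, pickMax f F = some v ∧ ∀ x ∈ F, f x ≤ f v :=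
  have hmax := (F.exists_max_image f hF).choose_spec
  ⟨_, hmax.1, dif_pos hF, hmax.2⟩

variable {V T : Type} [Fintype V] [DecidableEq V] [DecidableEq T]
  {a : T → ℝ} {Ts : V → Finset T} {b : V → ℝ} {B : ℝ}

theorem subset_greedyAux (n : ℕ) (W : Finset V) (s : ℝ) : W ⊆ greedyAux a Ts b B n W s := by
  induction n generalizing W s with
  | zero => exact Finset.Subset.refl W
  | succ n ih =>
    rw [greedyAux]
    split
    · exact Finset.Subset.refl W
    · split_ifs
      · exact Finset.Subset.refl W
      · exact (Finset.subset_insert _ W).trans (ih _ _)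

theorem mem_greedyAux_succ {n : ℕ} {W : Finset V} {s : ℝ} {w : V} (hb : ∀ v, 0 < b v)
    (hwW : w ∉ W) (hwB : b w ≤ B - s) (hw : 0 ≤ margP a Ts b w W)
    (hrival : ∀ v ∉ W, v ≠ w → margP a Ts b w W / b w ≤ margP a Ts b v W / b v →
      w ∈ greedyAux a Ts b B n (insert v W) (s + b v)) :
    w ∈ greedyAux a Ts b B (n + 1) W s := by
  have hwF : w ∈ Finset.univ.filter (fun v => v ∉ W ∧ b v ≤ B - s) := by simp [hwW, hwB]
  obtain ⟨v, hvF, hpick, hmax⟩ :=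
    exists_pickMax_eq_some (fun v => margP a Ts b v W / b v) ⟨w, hwF⟩
  have hratio : margP a Ts b w W / b w ≤ margP a Ts b v W / b v := hmax w hwF
  have hv : 0 ≤ margP a Ts b v W := by
    simpa [le_div_iff₀ (hb v)] using (div_nonneg hw (hb w).le).trans hratio
  simp only [greedyAux, hpick, if_neg hv.not_gt]
  obtain rfl | hvw := eq_or_ne v w
  · exact subset_greedyAux n _ _ (Finset.mem_insert_self v W)
  · exact hrival v (Finset.mem_filter.1 hvF).2.1 hvw hratio

end Greedy

namespace ThreeVehicles

/-- The appraisements `a₁, …, a₅` of the instance, indexed from `0`. -/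
def appraisement : Fin 5 → ℝ := ![2, 3, 4, 2, 5]

/-- The task subsets `T₁, T₂, T₃` of the instance; vehicles and tasks are indexed from `0`, so that
`v₂` is vehicle `1`. -/
def tasks : Fin 3 → Finset (Fin 5) := ![{0, 2, 4}, {0, 1, 4}, {2, 3, 4}]

/-- The bid profile of the instance in which `v₂` bids `x` and the other two bid their cost `2`. -/
def bids (x : ℝ) : Fin 3 → ℝ := ![2, x, 2]

theorem bids_pos {x : ℝ} (hx : 0 < x) (v : Fin 3) : 0 < bids x v := by
  fin_cases v <;> simp [bids, hx]

theorem bids_of_ne_one (x : ℝ) {v : Fin 3} (hv : v ≠ 1) : bids x v = 2 := by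
  fin_cases v <;> simp_all [bids]

theorem appraisement_nonneg (t : Fin 5) : 0 ≤ appraisement t := by
  fin_cases t <;> simp [appraisement]

theorem one_mem_tasks_iff (v : Fin 3) : 1 ∈ tasks v ↔ v = 1 := by
  decide +revert

theorem three_le_margA_one {W : Finset (Fin 3)} (hW : 1 ∉ W) :
    3 ≤ margA appraisement tasks 1 W := by
  have hnew : 1 ∈ tasks 1 \ W.biUnion tasks := by simp [one_mem_tasks_iff, hW]
  rw [margA_eq_sum_sdiff]
  exact Finset.single_le_sum (f := appraisement) (fun t _ => appraisement_nonneg t) hnew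

theorem margP_one_pos {x : ℝ} (hx₃ : x < 3) {W : Finset (Fin 3)} (hW : 1 ∉ W) :
    0 < margP appraisement tasks (bids x) 1 W := by
  have hbid : bids x 1 = x := rfl
  rw [margP_eq_margA_sub _ _ _ hW, hbid]
  linarith [three_le_margA_one hW]

theorem margA_rival_singleton {u v : Fin 3} (hu : u ≠ 1) (hv : v ≠ 1) (huv : u ≠ v) :
    margA appraisement tasks u {v} = 2 := by
  rw [margA_eq_sum_sdiff, Finset.singleton_biUnion]
  obtain ⟨rfl, rfl⟩ | ⟨rfl, rfl⟩ : (u = 0 ∧ v = 2) ∨ (u = 2 ∧ v = 0) := by omega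
  · have hnew : tasks 0 \ tasks 2 = {0} := by decide
    simp [hnew, appraisement]
  · have hnew : tasks 2 \ tasks 0 = {3} := by decide
    simp [hnew, appraisement]

theorem margP_rival_singleton (x : ℝ) {u v : Fin 3} (hu : u ≠ 1) (hv : v ≠ 1) (huv : u ≠ v) :
    margP appraisement tasks (bids x) u {v} = 0 := by
  rw [margP_eq_margA_sub _ _ _ (Finset.notMem_singleton.2 huv), margA_rival_singleton hu hv huv,
    bids_of_ne_one x hu, sub_self]

theorem one_mem_greedyAux_singleton {x : ℝ} (hx₀ : 0 < x) (hx₃ : x < 3) (n : ℕ) {v : Fin 3}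
    (hv : v ≠ 1) : 1 ∈ greedyAux appraisement tasks (bids x) 5 (n + 1) {v} 2 := by
  have hW : 1 ∉ ({v} : Finset (Fin 3)) := Finset.notMem_singleton.2 hv.symm
  have hbudget : bids x 1 ≤ 5 - 2 := by
    change x ≤ 5 - 2
    linarith
  have hratio : 0 < margP appraisement tasks (bids x) 1 {v} / bids x 1 :=
    div_pos (margP_one_pos hx₃ hW) (bids_pos hx₀ 1)
  refine mem_greedyAux_succ (bids_pos hx₀) hW hbudget (margP_one_pos hx₃ hW).le
    fun u huW hu hle => absurd hle ?_
  rw [margP_rival_singleton x hu hv (Finset.notMem_singleton.1 huW), zero_div]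
  exact hratio.not_ge

theorem one_mem_greedyHeuristic {x : ℝ} (hx₀ : 0 < x) (hx₃ : x < 3) :
    1 ∈ greedyHeuristic appraisement tasks (bids x) 5 := by
  have hW : (1 : Fin 3) ∉ (∅ : Finset (Fin 3)) := Finset.notMem_empty 1
  have hbudget : bids x 1 ≤ 5 - 0 := by
    change x ≤ 5 - 0
    linarith
  rw [greedyHeuristic, Fintype.card_fin]
  refine mem_greedyAux_succ (bids_pos hx₀) hW hbudget (margP_one_pos hx₃ hW).le
    fun v _ hv _ => ?_
  rw [insert_empty_eq, zero_add, bids_of_ne_one x hv]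
  exact one_mem_greedyAux_singleton hx₀ hx₃ 1 hv

end ThreeVehicles

/-- the greedy-heuristic is not truthful.  With tasks
`T = {t₁,…,t₅}`, appraisements `2,3,4,2,5`, budget `B = 5`, vehicles
`V = {v₁,v₂,v₃}` with `T₁ = {t₁,t₃,t₅}`, `T₂ = {t₁,t₂,t₅}`, `T₃ = {t₃,t₄,t₅}`
and true costs `c₁ = c₂ = c₃ = 2`: bidding truthfully, `v₂` wins with payment
`2` (its bid) and utility `0`; but for any `λ ∈ (0,1)`, bidding `2 + λ` (others
truthful) `v₂` still wins, is paid `2 + λ`, and gets utility `λ > 0` —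
strictly more than by bidding truthfully. -/
theorem greedyHeuristic_not_truthful :
    let a : Fin 5 → ℝ := ![2, 3, 4, 2, 5]
    let Ts : Fin 3 → Finset (Fin 5) := ![{0, 2, 4}, {0, 1, 4}, {2, 3, 4}]
    -- utility of v₂ (true cost 2) when the bid profile is `bb`:
    -- it is paid its bid if it wins, so the utility is `bb v₂ − 2` if it wins.
    let util : (Fin 3 → ℝ) → ℝ := fun bb =>
      if (1 : Fin 3) ∈ greedyHeuristic a Ts bb 5 then bb 1 - 2 else 0
    ((1 : Fin 3) ∈ greedyHeuristic a Ts ![2, 2, 2] 5 ∧ util ![2, 2, 2] = 0) ∧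
    ∀ l : ℝ, 0 < l → l < 1 →
      (1 : Fin 3) ∈ greedyHeuristic a Ts ![2, 2 + l, 2] 5 ∧
      util ![2, 2 + l, 2] = l ∧
      util ![2, 2, 2] < util ![2, 2 + l, 2] := by
  intro a Ts util
  have wins {x : ℝ} (hx₀ : 0 < x) (hx₃ : x < 3) : 1 ∈ greedyHeuristic a Ts ![2, x, 2] 5 :=
    ThreeVehicles.one_mem_greedyHeuristic hx₀ hx₃
  have util_eq {x : ℝ} (hx₀ : 0 < x) (hx₃ : x < 3) : util ![2, x, 2] = x - 2 :=
    if_pos (wins hx₀ hx₃)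
  have truthful : util ![2, 2, 2] = 0 := by
    rw [util_eq (by norm_num) (by norm_num), sub_self]
  refine ⟨⟨wins (by norm_num) (by norm_num), truthful⟩, fun l hl₀ hl₁ => ?_⟩
  have overbid : util ![2, 2 + l, 2] = l := by
    rw [util_eq (by linarith) (by linarith), add_sub_cancel_left]
  exact ⟨wins (by linarith) (by linarith), overbid, by rwa [truthful, overbid]⟩
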